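/- Let n > q ≥ 3 and 3 ≤ k ≤ q. For g ∈ SO(k) let ĝ ∈ SO(n) be the block-diagonal matrix acting as g on the coordinates (x₁,…,x_k) and as the identity on (x_{k+1},…,x_n). Let U be an open neighborhood of 0 in ℝⁿ with ĝ(U) = U for all g ∈ SO(k), and let Π be a smooth Nambu structure of order q on U such that: (1) Π − Π_{k,q} is flat along Σ = {x ∈ U : x₁ = ⋯ = x_{q+1} = 0}; and (2) (e*_{k+1} ∧ ⋯ ∧ e*_{q+1}) ⌟ Π = (e*_{k+1} ∧ ⋯ ∧ e*_{q+1}) ⌟ Π_{k,q} on U. Then Π is SO(k)-invariant: (⋀^q ĝ)(Π(ĝ⁻¹ x)) = Π(x) for every g ∈ SO(k) and every x ∈ U. -/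

import Mathlib

open scoped ContDiff

namespace NambuLin

/-- Index set for the standard basis of the `q`-th exterior power of `ℝⁿ`:
increasing multi-indices, encoded as `q`-element subsets of `Fin n`. -/
abbrev Idx (n q : ℕ) := {s : Finset (Fin n) // s.card = q}

/-- A `q`-vector of `ℝⁿ`, given by its coordinates in the standard basis
`{e_{i₁} ∧ ⋯ ∧ e_{i_q}}` of `⋀^q(ℝⁿ)`. -/
abbrev MultiVec (n q : ℕ) := Idx n q → ℝ

/-- The Jacobian matrix of a map `φ : ℝⁿ → ℝⁿ` at a point `x`. -/
noncomputable def jac {n : ℕ} (φ : (Fin n → ℝ) → (Fin n → ℝ)) (x : Fin n → ℝ) :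
    Matrix (Fin n) (Fin n) ℝ :=
  Matrix.of fun i j => fderiv ℝ φ x (Pi.single j 1) i

/-- The `q`-th exterior power `⋀^q A` of a matrix `A`, acting on `q`-vectors in
coordinates: `((⋀^q A) w)_J = ∑_I det(A[J,I]) w_I`. -/
noncomputable def extPow (n q : ℕ) (A : Matrix (Fin n) (Fin n) ℝ) (w : MultiVec n q) :
    MultiVec n q :=
  fun J => ∑ I : Idx n q,
    (A.submatrix (J.1.orderEmbOfFin J.2) (I.1.orderEmbOfFin I.2)).det * w I

/-- The constant `q`-vector `e₁ ∧ ⋯ ∧ e_q` in coordinates. -/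
def stdVec (n q : ℕ) : MultiVec n q :=
  fun J => if (J : Finset (Fin n)) = Finset.univ.filter (fun i : Fin n => (i : ℕ) < q) then 1 else 0

/-- `φ` is a `C^∞` diffeomorphism from the open set `W` onto the open set `φ '' W`. -/
def IsSmoothDiffeoOn {n : ℕ} (φ : (Fin n → ℝ) → (Fin n → ℝ)) (W : Set (Fin n → ℝ)) : Prop :=
  IsOpen W ∧ IsOpen (φ '' W) ∧ ContDiffOn ℝ ∞ φ W ∧
    ∃ ψ : (Fin n → ℝ) → (Fin n → ℝ), ContDiffOn ℝ ∞ ψ (φ '' W) ∧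
      (∀ x ∈ W, ψ (φ x) = x) ∧ (∀ y ∈ φ '' W, φ (ψ y) = y)

/-- `P` is a (smooth) Nambu structure of order `q` on `U`: it is a smooth `q`-vector
field, and around every point where it does not vanish there is a local `C^∞`
coordinate system in which it becomes the constant `q`-vector `e₁ ∧ ⋯ ∧ e_q`. -/
def IsNambu (n q : ℕ) (P : (Fin n → ℝ) → MultiVec n q) (U : Set (Fin n → ℝ)) : Prop :=
  ContDiffOn ℝ ∞ P U ∧
    ∀ p ∈ U, P p ≠ 0 →
      ∃ W, p ∈ W ∧ W ⊆ U ∧ ∃ φ, IsSmoothDiffeoOn φ W ∧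
        ∀ x ∈ W, extPow n q (jac φ x) (P x) = stdVec n q

/-- The signs `ε_j` (`= 1` for the first `k` indices, `= -1` afterwards;
`0`-based indexing, so `ε_j = 1` iff `j < k`). -/
def eps {n : ℕ} (k : ℕ) (j : Fin n) : ℝ := if (j : ℕ) < k then 1 else -1

/-- The set of indices `{1, …, q+1}` (in `0`-based form: `{0,…,q}`). -/
def topIdx (n q : ℕ) : Finset (Fin n) := Finset.univ.filter (fun i : Fin n => (i : ℕ) < q + 1)

/-- The nondegenerate Type 1 linear Nambu structure `Π_{k,q}` of order `q` and
signature `(k, q+1-k)`: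
`Π_{k,q}(x) = ∑_{j=1}^{q+1} (−1)^{j−1} ε_j x_j e₁ ∧ ⋯ ∧ ê_j ∧ ⋯ ∧ e_{q+1}`
(here written with `0`-based indices `j`, whence the sign `(−1)^j`). -/
def modelPi (n q k : ℕ) (x : Fin n → ℝ) : MultiVec n q :=
  fun J => ∑ j : Fin n,
    if ((j : ℕ) < q + 1 ∧ (J : Finset (Fin n)) = (topIdx n q).erase j)
    then (-1 : ℝ) ^ (j : ℕ) * eps k j * x j else 0

/-- The shuffle sign `(−1)^{#{(s,t) ∈ S × K : s > t}}`: for disjoint increasing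
multi-indices `S, K` one has `e*_S ∧ e*_K = shufSign S K · e*_{S ∪ K}`. -/
def shufSign {n : ℕ} (S K : Finset (Fin n)) : ℝ :=
  (-1 : ℝ) ^ (((S ×ˢ K).filter fun p : Fin n × Fin n => p.2 < p.1).card)

/-- The contraction `e*_S ⌟ w` of a `q`-vector `w` with the basis covector
`e*_S = e*_{s₁} ∧ ⋯ ∧ e*_{s_r}` (`S = {s₁ < ⋯ < s_r}`, `r = q - m`), determined by
`⟨e*_K, e*_S ⌟ w⟩ = ⟨e*_S ∧ e*_K, w⟩`: its `K`-th coordinate is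
`shufSign S K · w_{S ∪ K}` when `S, K` are disjoint (and `0` otherwise, in
accordance with the graded pairing). -/
def contr (n q m : ℕ) (S : Finset (Fin n)) (w : MultiVec n q) : MultiVec n m :=
  fun K => if h : Disjoint S (K : Finset (Fin n)) ∧ (S ∪ (K : Finset (Fin n))).card = q
    then shufSign S K.1 * w ⟨S ∪ K.1, h.2⟩ else 0

/-- The set of indices `{k+1, …, q+1}` (in `0`-based form: `{k,…,q}`), so that
`e*_{k+1} ∧ ⋯ ∧ e*_{q+1}` corresponds to `sliceIdx n q k`. -/
def sliceIdx (n q k : ℕ) : Finset (Fin n) :=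
  Finset.univ.filter fun i : Fin n => k ≤ (i : ℕ) ∧ (i : ℕ) < q + 1

/-- The block-diagonal matrix `ĝ ∈ SO(n)` acting as `g ∈ SO(k)` on the coordinates
`x₁,…,x_k` and as the identity on `x_{k+1},…,x_n`. -/
def ghat (n k : ℕ) (g : Matrix (Fin k) (Fin k) ℝ) : Matrix (Fin n) (Fin n) ℝ :=
  Matrix.of fun i j =>
    if hi : (i : ℕ) < k then
      (if hj : (j : ℕ) < k then g ⟨i, hi⟩ ⟨j, hj⟩ else 0)
    else (if i = j then 1 else 0)


lemma exists_perm_of_injective {n q : ℕ} (p : Fin q → Fin n) (hp : Function.Injective p) :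
    ∃ (K : Idx n q) (τ : Equiv.Perm (Fin q)), K.1 = Finset.univ.image p ∧
      p = fun i => K.1.orderEmbOfFin K.2 (τ i) := by
  have hc : (Finset.univ.image p).card = q := by
    rw [Finset.card_image_of_injective _ hp]; simp
  let K : Idx n q := ⟨Finset.univ.image p, hc⟩
  have hmem : ∀ i, ∃ j, K.1.orderEmbOfFin K.2 j = p i := by
    intro i
    have : p i ∈ Set.range (K.1.orderEmbOfFin K.2) := by
      rw [Finset.range_orderEmbOfFin]; simp [K]
    exact this
  choose τ hτ using hmem
  have hinj : Function.Injective τ := by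
    intro a b hab
    apply hp
    rw [← hτ a, ← hτ b, hab]
  refine ⟨K, Equiv.ofBijective τ (Finite.injective_iff_bijective.1 hinj), rfl, ?_⟩
  funext i
  exact (hτ i).symm

lemma idx_emb_perm_injective (n q : ℕ) :
    Function.Injective (fun (x : Idx n q × Equiv.Perm (Fin q)) (i : Fin q) =>
      x.1.1.orderEmbOfFin x.1.2 (x.2 i)) := by
  rintro ⟨K, τ⟩ ⟨K', τ'⟩ h
  have hK : K = K' := by
    apply Subtype.ext
    have h1 := congrArg Set.range h
    have e : ∀ (K : Idx n q) (τ : Equiv.Perm (Fin q)),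
        Set.range (fun i => K.1.orderEmbOfFin K.2 (τ i)) = K.1 := by
      intro K τ
      rw [← Finset.range_orderEmbOfFin K.1 K.2]
      exact τ.surjective.range_comp _
    simp only [e] at h1
    exact_mod_cast h1
  subst hK
  have : τ = τ' := by
    ext i
    have := congrFun h i
    simp only [EmbeddingLike.apply_eq_iff_eq] at this
    rw [this]
  rw [this]

/-- Cauchy–Binet. -/
lemma cauchy_binet {n q : ℕ} (A : Matrix (Fin q) (Fin n) ℝ) (B : Matrix (Fin n) (Fin q) ℝ) :
    (A * B).det = ∑ K : Idx n q, (A.submatrix id (K.1.orderEmbOfFin K.2)).det *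
      (B.submatrix (K.1.orderEmbOfFin K.2) id).det := by
  have h1 : (A * B).det = ∑ p : Fin q → Fin n, (∏ i, A i (p i)) * (B.submatrix p id).det := by
    have : A * B = fun i => ∑ j, A i j • B j := by
      funext i l
      simp [Matrix.mul_apply]
    rw [this]
    change Matrix.detRowAlternating.toMultilinearMap (fun i => ∑ j, A i j • B j) = _
    rw [MultilinearMap.map_sum]
    refine Finset.sum_congr rfl fun p _ => ?_
    rw [MultilinearMap.map_smul_univ, smul_eq_mul]
    rfl
  rw [h1]
  have h2 : ∀ K : Idx n q, (A.submatrix id (K.1.orderEmbOfFin K.2)).det *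
      (B.submatrix (K.1.orderEmbOfFin K.2) id).det = ∑ τ : Equiv.Perm (Fin q),
        (∏ i, A i (K.1.orderEmbOfFin K.2 (τ i))) *
          (B.submatrix (fun i => K.1.orderEmbOfFin K.2 (τ i)) id).det := by
    intro K
    rw [← Matrix.det_transpose, Matrix.det_apply', Finset.sum_mul]
    refine Finset.sum_congr rfl fun τ _ => ?_
    have := Matrix.det_permute τ (B.submatrix (K.1.orderEmbOfFin K.2) id)
    simp only [Matrix.submatrix_submatrix] at this
    change _ = _ * (B.submatrix ((K.1.orderEmbOfFin K.2) ∘ τ) (id ∘ id)).det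
    rw [this]
    simp only [Matrix.transpose_apply, Matrix.submatrix_apply, id]
    ring
  simp_rw [h2]
  rw [← Fintype.sum_prod_type']
  symm
  apply Fintype.sum_of_injective _ (idx_emb_perm_injective n q)
  · intro p hp
    have : ¬ Function.Injective p := by
      intro hi
      obtain ⟨K, τ, -, h⟩ := exists_perm_of_injective p hi
      exact hp ⟨(K, τ), h.symm⟩
    rw [Function.Injective] at this
    push Not at this
    obtain ⟨a, b, hab, hne⟩ := this
    rw [Matrix.det_zero_of_row_eq hne (by funext l; simp [hab]), mul_zero]
  · intro x
    rfl

lemma extPow_mul {n q : ℕ} (A B : Matrix (Fin n) (Fin n) ℝ) (w : MultiVec n q) :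
    extPow n q (A * B) w = extPow n q A (extPow n q B w) := by
  funext J
  simp only [extPow, Finset.mul_sum]
  rw [Finset.sum_comm]
  refine Finset.sum_congr rfl fun I _ => ?_
  have : (A * B).submatrix (J.1.orderEmbOfFin J.2) (I.1.orderEmbOfFin I.2)
      = (A.submatrix (J.1.orderEmbOfFin J.2) id) * (B.submatrix id (I.1.orderEmbOfFin I.2)) := by
    rw [Matrix.submatrix_mul _ _ _ id _ Function.bijective_id]
  rw [this, cauchy_binet, Finset.sum_mul]
  refine Finset.sum_congr rfl fun K _ => ?_
  simp only [Matrix.submatrix_submatrix, Function.id_comp, Function.comp_id]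
  ring

/-- Minor with a row index outside the column set of an identity-like row vanishes. -/
lemma det_submatrix_row_zero {n q : ℕ} (A : Matrix (Fin n) (Fin n) ℝ) (J I : Idx n q) (s : Fin n)
    (hs : s ∈ J.1) (h : ∀ j ∈ I.1, A s j = 0) :
    (A.submatrix (J.1.orderEmbOfFin J.2) (I.1.orderEmbOfFin I.2)).det = 0 := by
  have : s ∈ Set.range (J.1.orderEmbOfFin J.2) := by
    rw [Finset.range_orderEmbOfFin]; exact hs
  obtain ⟨a, ha⟩ := this
  apply Matrix.det_eq_zero_of_row_eq_zero a
  intro j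
  simp only [Matrix.submatrix_apply, ha]
  exact h _ (Finset.orderEmbOfFin_mem _ _ _)

lemma extPow_one {n q : ℕ} (w : MultiVec n q) : extPow n q 1 w = w := by
  funext J
  simp only [extPow]
  rw [Finset.sum_eq_single J]
  · rw [Matrix.submatrix_one _ (J.1.orderEmbOfFin J.2).injective, Matrix.det_one, one_mul]
  · intro I _ hI
    have : ∃ s ∈ J.1, s ∉ I.1 := by
      by_contra hcon
      push Not at hcon
      exact hI (Subtype.ext (Finset.eq_of_subset_of_card_le hcon (by rw [I.2, J.2])).symm)
    obtain ⟨s, hs, hsI⟩ := this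
    rw [det_submatrix_row_zero 1 J I s hs, zero_mul]
    intro j hj
    rw [Matrix.one_apply_ne]
    rintro rfl
    exact hsI hj
  · simp

lemma extPow_smul {n q : ℕ} (A : Matrix (Fin n) (Fin n) ℝ) (c : ℝ) (w : MultiVec n q) :
    extPow n q A (c • w) = c • extPow n q A w := by
  funext J
  simp only [extPow, Pi.smul_apply, smul_eq_mul, Finset.mul_sum]
  refine Finset.sum_congr rfl fun I _ => by ring

lemma extPow_continuous {n q : ℕ} (A : Matrix (Fin n) (Fin n) ℝ) :
    Continuous (extPow n q A) := by
  unfold extPow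
  fun_prop

def stdIdx (n q : ℕ) (h : q ≤ n) : Idx n q :=
  ⟨Finset.univ.filter (fun i : Fin n => (i : ℕ) < q), by
    rw [Fin.card_filter_val_lt]; omega⟩

lemma stdIdx_emb (n q : ℕ) (h : q ≤ n) :
    ((stdIdx n q h).1.orderEmbOfFin (stdIdx n q h).2 : Fin q → Fin n) = Fin.castLE h := by
  symm
  apply Finset.orderEmbOfFin_unique
  · intro x; simp [stdIdx]
  · exact Fin.strictMono_castLE h

lemma extPow_std {n q : ℕ} (h : q ≤ n) (A : Matrix (Fin n) (Fin n) ℝ) (J : Idx n q) :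
    extPow n q A (stdVec n q) J =
      (A.submatrix (J.1.orderEmbOfFin J.2) (Fin.castLE h)).det := by
  simp only [extPow]
  rw [Finset.sum_eq_single (stdIdx n q h)]
  · rw [stdIdx_emb]; simp [stdVec, stdIdx]
  · intro I _ hI
    have : stdVec n q I = 0 := by
      simp only [stdVec]
      rw [if_neg]
      intro h'
      exact hI (Subtype.ext h')
    rw [this, mul_zero]
  · simp

/-- A matrix whose rows `j ≥ q` vanish on the first `q` columns maps `stdVec` to a multiple. -/
lemma extPow_std_of_block {n q : ℕ} (h : q ≤ n) (B : Matrix (Fin n) (Fin n) ℝ)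
    (hB : ∀ i j : Fin n, q ≤ (i : ℕ) → (j : ℕ) < q → B i j = 0) :
    ∃ c : ℝ, extPow n q B (stdVec n q) = c • stdVec n q := by
  refine ⟨(B.submatrix (Fin.castLE h) (Fin.castLE h)).det, ?_⟩
  funext J
  rw [extPow_std h]
  by_cases hJ : J = stdIdx n q h
  · subst hJ
    rw [stdIdx_emb]
    simp [stdVec, stdIdx]
  · have h1 : stdVec n q J = 0 := by
      simp only [stdVec]
      rw [if_neg]
      intro h'
      exact hJ (Subtype.ext h')
    simp only [Pi.smul_apply, h1, smul_zero]
    have : ∃ s ∈ J.1, q ≤ (s : ℕ) := by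
      by_contra hcon
      push Not at hcon
      apply hJ
      apply Subtype.ext
      apply Finset.eq_of_subset_of_card_le
      · intro s hs; simp [stdIdx, hcon s hs]
      · rw [J.2, (stdIdx n q h).2]
    obtain ⟨s, hs, hsq⟩ := this
    have hr : s ∈ Set.range (J.1.orderEmbOfFin J.2) := by
      rw [Finset.range_orderEmbOfFin]; exact hs
    obtain ⟨a, ha⟩ := hr
    apply Matrix.det_eq_zero_of_row_eq_zero a
    intro j
    simp only [Matrix.submatrix_apply, ha]
    exact hB _ _ hsq (by simp)



lemma mem_sliceIdx {n q k : ℕ} (i : Fin n) : i ∈ sliceIdx n q k ↔ k ≤ (i : ℕ) ∧ (i : ℕ) < q + 1 := by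
  simp [sliceIdx]

lemma mem_topIdx {n q : ℕ} (i : Fin n) : i ∈ topIdx n q ↔ (i : ℕ) < q + 1 := by
  simp [topIdx]

lemma card_topIdx {n q : ℕ} (hn : q < n) : (topIdx n q).card = q + 1 := by
  rw [topIdx, Fin.card_filter_val_lt]; omega

lemma card_sliceIdx {n q k : ℕ} (hn : q < n) (hkq : k ≤ q) : (sliceIdx n q k).card = q + 1 - k := by
  have h1 : sliceIdx n q k = (topIdx n q) \ (Finset.univ.filter (fun i : Fin n => (i : ℕ) < k)) := by
    ext i
    simp only [mem_sliceIdx, Finset.mem_sdiff, mem_topIdx, Finset.mem_filter, Finset.mem_univ,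
      true_and]
    omega
  rw [h1, Finset.card_sdiff_of_subset, card_topIdx hn, Fin.card_filter_val_lt]
  · congr 1; omega
  · intro i
    simp only [mem_topIdx, Finset.mem_filter, Finset.mem_univ, true_and]
    omega

lemma slice_eq {n q k : ℕ} (hn : q < n) (hk : 1 ≤ k) (hkq : k ≤ q) (w w' : MultiVec n q)
    (h : contr n q (k - 1) (sliceIdx n q k) w = contr n q (k - 1) (sliceIdx n q k) w')
    (J : Idx n q) (hJ : sliceIdx n q k ⊆ J.1) : w J = w' J := by
  have hc : (J.1 \ sliceIdx n q k).card = k - 1 := by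
    rw [Finset.card_sdiff_of_subset hJ, card_sliceIdx hn hkq, J.2]; omega
  have h1 := congrFun h ⟨J.1 \ sliceIdx n q k, hc⟩
  have hd : Disjoint (sliceIdx n q k) (J.1 \ sliceIdx n q k) := Finset.disjoint_sdiff
  have hu : sliceIdx n q k ∪ (J.1 \ sliceIdx n q k) = J.1 := Finset.union_sdiff_of_subset hJ
  have hu' : (sliceIdx n q k ∪ (J.1 \ sliceIdx n q k)).card = q := by rw [hu]; exact J.2
  simp only [contr] at h1
  rw [dif_pos ⟨hd, hu'⟩, dif_pos ⟨hd, hu'⟩] at h1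
  have h2 := mul_left_cancel₀ (by unfold shufSign; positivity) h1
  have hJ' : (⟨sliceIdx n q k ∪ (J.1 \ sliceIdx n q k), hu'⟩ : Idx n q) = J := Subtype.ext hu
  rwa [hJ'] at h2

/-- `top ∖ {b}`. -/
def topErase (n q : ℕ) (hn : q < n) (b : Fin (q + 1)) : Idx n q :=
  ⟨(topIdx n q).erase (Fin.castLE hn b), by
    rw [Finset.card_erase_of_mem, card_topIdx hn]
    · rfl
    · rw [mem_topIdx]; exact b.2⟩

lemma topErase_emb (n q : ℕ) (hn : q < n) (b : Fin (q + 1)) :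
    ((topErase n q hn b).1.orderEmbOfFin (topErase n q hn b).2 : Fin q → Fin n) =
      fun i => Fin.castLE hn (b.succAbove i) := by
  symm
  apply Finset.orderEmbOfFin_unique
  · intro i
    simp only [topErase, Finset.mem_erase, mem_topIdx, ne_eq, Fin.castLE_inj]
    exact ⟨Fin.succAbove_ne _ _, (b.succAbove i).2⟩
  · exact (Fin.strictMono_castLE hn).comp (Fin.strictMono_succAbove b)

lemma topErase_injective (n q : ℕ) (hn : q < n) : Function.Injective (topErase n q hn) := by
  intro a b h
  by_contra hne
  have h1 : Fin.castLE hn a ∈ (topErase n q hn b).1 := by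
    simp only [topErase, Finset.mem_erase, mem_topIdx, ne_eq, Fin.castLE_inj]
    exact ⟨hne, a.2⟩
  rw [← h] at h1
  simp [topErase] at h1

lemma modelPi_eq (n q k : ℕ) (hn : q < n) (x : Fin n → ℝ) (J : Idx n q) :
    modelPi n q k x J = ∑ j : Fin (q + 1), if J = topErase n q hn j then
      (-1 : ℝ) ^ (j : ℕ) * eps k (Fin.castLE hn j) * x (Fin.castLE hn j) else 0 := by
  rw [modelPi]
  symm
  apply Fintype.sum_of_injective (Fin.castLE hn) (Fin.castLE_injective hn)
  · intro i hi
    rw [if_neg]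
    rintro ⟨h1, -⟩
    exact hi ⟨⟨i, h1⟩, rfl⟩
  · intro j
    have : ((j : ℕ) < q + 1 ∧ J.1 = (topIdx n q).erase (Fin.castLE hn j)) ↔ J = topErase n q hn j := by
      rw [Subtype.ext_iff]
      exact ⟨fun h => h.2, fun h => ⟨j.2, h⟩⟩
    simp only [Fin.val_castLE, this]

lemma modelPi_topErase (n q k : ℕ) (hn : q < n) (x : Fin n → ℝ) (b : Fin (q + 1)) :
    modelPi n q k x (topErase n q hn b) =
      (-1 : ℝ) ^ (b : ℕ) * eps k (Fin.castLE hn b) * x (Fin.castLE hn b) := by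
  rw [modelPi_eq n q k hn, Finset.sum_eq_single b]
  · simp
  · intro j _ hj
    rw [if_neg]
    intro h
    exact hj (topErase_injective n q hn h).symm
  · simp

lemma modelPi_eq_zero (n q k : ℕ) (hn : q < n) (x : Fin n → ℝ) (J : Idx n q) (m : Fin n)
    (hm : m ∈ J.1) (hmq : q + 1 ≤ (m : ℕ)) : modelPi n q k x J = 0 := by
  rw [modelPi_eq n q k hn]
  apply Finset.sum_eq_zero
  intro j _
  rw [if_neg]
  rintro rfl
  simp only [topErase, Finset.mem_erase, mem_topIdx] at hm
  omega

lemma extPow_modelPi (n q k : ℕ) (hn : q < n) (x : Fin n → ℝ) (A : Matrix (Fin n) (Fin n) ℝ)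
    (b : Fin (q + 1)) :
    extPow n q A (modelPi n q k x) (topErase n q hn b) =
      ∑ j : Fin (q + 1), ((A.submatrix (Fin.castLE hn) (Fin.castLE hn)).submatrix
          b.succAbove j.succAbove).det *
        ((-1 : ℝ) ^ (j : ℕ) * eps k (Fin.castLE hn j) * x (Fin.castLE hn j)) := by
  rw [extPow]
  symm
  apply Fintype.sum_of_injective (topErase n q hn) (topErase_injective n q hn)
  · intro J hJ
    rw [modelPi_eq n q k hn, Finset.sum_eq_zero, mul_zero]
    intro j _
    rw [if_neg]
    rintro rfl
    exact hJ ⟨j, rfl⟩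
  · intro j
    rw [modelPi_topErase, topErase_emb, topErase_emb]
    rfl

lemma slice_subset_topErase (n q k : ℕ) (hn : q < n) (b : Fin (q + 1)) (hb : (b : ℕ) < k) :
    sliceIdx n q k ⊆ (topErase n q hn b).1 := by
  intro i
  simp only [mem_sliceIdx, topErase, Finset.mem_erase, mem_topIdx]
  rintro ⟨h1, h2⟩
  refine ⟨?_, h2⟩
  rintro rfl
  simp at h1
  omega

/-- Plücker-type vector. -/
lemma det_submatrix_pm {n q : ℕ} (M : Matrix (Fin n) (Fin q) ℝ) (p : Fin q → Fin n)
    (hp : Function.Injective p) (K : Idx n q) (hK : K.1 = Finset.univ.image p) :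
    (M.submatrix p id).det = (M.submatrix (K.1.orderEmbOfFin K.2) id).det ∨
    (M.submatrix p id).det = -(M.submatrix (K.1.orderEmbOfFin K.2) id).det := by
  obtain ⟨K', τ, hK', h⟩ := exists_perm_of_injective p hp
  have : K = K' := Subtype.ext (hK.trans hK'.symm)
  subst this
  have h2 := Matrix.det_permute τ (M.submatrix (K.1.orderEmbOfFin K.2) id)
  have h3 : (M.submatrix p id) = (M.submatrix (K.1.orderEmbOfFin K.2) id).submatrix τ id := by
    rw [h]; rfl
  rw [h3, h2]
  rcases Int.units_eq_one_or (Equiv.Perm.sign τ) with h4 | h4 <;> rw [h4] <;> simp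

lemma annihilator_rel {n q k : ℕ} (hn : q < n) (hk : 1 ≤ k) (hkq : k ≤ q)
    (M : Matrix (Fin n) (Fin q) ℝ) (w : MultiVec n q)
    (hw : ∀ J : Idx n q, w J = (M.submatrix (J.1.orderEmbOfFin J.2) id).det) (x : Fin n → ℝ)
    (h : contr n q (k - 1) (sliceIdx n q k) w =
      contr n q (k - 1) (sliceIdx n q k) (modelPi n q k x))
    (α : Fin n → ℝ) (hα : ∀ l, ∑ i, α i * M i l = 0)
    (a b : Fin n) (ha : (a : ℕ) < k) (hb : (b : ℕ) < k) (hxb : x b ≠ 0) :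
    α a * x b = α b * x a := by
  by_cases hab : a = b
  · rw [hab]
  obtain ⟨q, rfl⟩ : ∃ q', q = q' + 1 := ⟨q - 1, by omega⟩
  have hsl := slice_eq hn hk hkq w _ h
  -- the index set top minus a, b
  have hcI : (((topIdx n (q+1)).erase a).erase b).card = q := by
    rw [Finset.card_erase_of_mem, Finset.card_erase_of_mem, card_topIdx hn]
    · rfl
    · rw [mem_topIdx]; omega
    · rw [Finset.mem_erase, mem_topIdx]; exact ⟨fun h => hab h.symm, by omega⟩
  let I : Finset (Fin n) := ((topIdx n (q+1)).erase a).erase b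
  let e : Fin q → Fin n := I.orderEmbOfFin hcI
  have heI : ∀ i, i ∈ I ↔ ∃ j, e j = i := by
    intro i
    have : i ∈ Set.range (I.orderEmbOfFin hcI) ↔ i ∈ I := by
      rw [Finset.range_orderEmbOfFin]; rfl
    rw [← this]; rfl
  have heinj : Function.Injective e := (I.orderEmbOfFin hcI).injective
  let D : Fin n → ℝ := fun i => (M.submatrix (Fin.cons i e) id).det
  obtain ⟨C, hC⟩ : ∃ C : Fin (q+1) → ℝ, ∀ i, D i = ∑ l, M i l * C l := by
    refine ⟨fun l => (-1 : ℝ) ^ (l : ℕ) * ((M.submatrix e id).submatrix id l.succAbove).det, ?_⟩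
    intro i
    change (M.submatrix (Fin.cons i e) id).det = _
    rw [Matrix.det_succ_row_zero]
    refine Finset.sum_congr rfl fun l _ => ?_
    have : (M.submatrix (Fin.cons i e : Fin (q+1) → Fin n) id).submatrix Fin.succ l.succAbove
        = (M.submatrix e id).submatrix id l.succAbove := by
      ext r s
      simp
    rw [this]
    simp only [Matrix.submatrix_apply, Fin.cons_zero, id]
    ring
  have hD0 : ∀ i, i ∈ I → D i = 0 := by
    intro i hi
    obtain ⟨j, hj⟩ := (heI i).1 hi
    refine Matrix.det_zero_of_row_eq (i := 0) (j := j.succ) (Fin.succ_ne_zero j).symm ?_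
    funext l
    simp [hj]
  have hDw : ∀ i, i ∉ I → ∀ K : Idx n (q+1), K.1 = insert i I → D i = w K ∨ D i = - w K := by
    intro i hi K hK
    rw [hw]
    apply det_submatrix_pm
    · rw [Fin.cons_injective_iff]
      refine ⟨?_, heinj⟩
      rintro ⟨j, hj⟩
      exact hi ((heI i).2 ⟨j, hj⟩)
    · rw [hK]
      ext m
      simp only [Finset.mem_insert, heI, Finset.mem_image, Finset.mem_univ, true_and]
      constructor
      · rintro (rfl | ⟨j, rfl⟩)
        · exact ⟨0, by simp⟩
        · exact ⟨j.succ, by simp⟩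
      · rintro ⟨j, rfl⟩
        refine Fin.cases ?_ (fun j => ?_) j
        · left; simp
        · right; exact ⟨j, by simp⟩
  have hDm : ∀ i : Fin n, q + 1 + 1 ≤ (i : ℕ) → D i = 0 := by
    intro i hi
    have hiI : i ∉ I := by
      simp only [I, Finset.mem_erase, mem_topIdx]; omega
    have hc : (insert i I).card = q + 1 := by
      rw [Finset.card_insert_of_notMem hiI, hcI]
    have h1 : w ⟨insert i I, hc⟩ = 0 := by
      rw [hsl, modelPi_eq_zero n (q+1) k hn x _ i _ hi]
      · simp
      · intro s hs
        rw [mem_sliceIdx] at hs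
        simp only [I, Finset.mem_insert, Finset.mem_erase, mem_topIdx]
        right
        refine ⟨?_, ?_, by omega⟩ <;> (rintro rfl; omega)
    rcases hDw i hiI ⟨_, hc⟩ rfl with h2 | h2 <;> simp [h2, h1]
  -- general relation
  have key : ∀ β : Fin n → ℝ, (∀ l, ∑ i, β i * M i l = 0) → β a * D a + β b * D b = 0 := by
    intro β hβ
    have h1 : ∑ i, β i * D i = 0 := by
      simp_rw [hC, Finset.mul_sum]
      rw [Finset.sum_comm]
      apply Finset.sum_eq_zero
      intro l _
      have := hβ l
      calc ∑ i, β i * (M i l * C l) = (∑ i, β i * M i l) * C l := by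
            rw [Finset.sum_mul]; exact Finset.sum_congr rfl fun i _ => by ring
        _ = 0 := by rw [this, zero_mul]
    rw [← h1]
    symm
    apply Fintype.sum_eq_add a b hab
    rintro i ⟨hia, hib⟩
    by_cases hi : (i : ℕ) < q + 1 + 1
    · rw [hD0 i, mul_zero]
      simp only [I, Finset.mem_erase, mem_topIdx]
      exact ⟨hib, hia, hi⟩
    · rw [hDm i (by omega), mul_zero]
  -- the special relation
  let β : Fin n → ℝ := fun i => if hi : (i : ℕ) < q + 1 + 1 then
    (-1 : ℝ) ^ (i : ℕ) * w (topErase n (q+1) hn ⟨i, hi⟩) else 0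
  have hβx : ∀ i : Fin n, (i : ℕ) < k → β i = x i := by
    intro i hi
    have hi' : (i : ℕ) < q + 1 + 1 := by omega
    simp only [β, dif_pos hi']
    rw [hsl _ (slice_subset_topErase n (q+1) k hn _ hi), modelPi_topErase]
    simp only [eps, Fin.val_castLE, if_pos hi]
    have : (-1 : ℝ) ^ (i : ℕ) * (-1 : ℝ) ^ (i : ℕ) = 1 := by
      rw [← mul_pow]; simp
    rw [mul_one, ← mul_assoc, this, one_mul]
    rfl
  have hβ : ∀ l, ∑ i, β i * M i l = 0 := by
    intro l
    let N : Matrix (Fin (q+1+1)) (Fin (q+1+1)) ℝ := fun i => Fin.cons (M (Fin.castLE hn i) l)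
      (fun c => M (Fin.castLE hn i) c)
    have hN : N.det = 0 := by
      apply Matrix.det_zero_of_column_eq (i := 0) (j := l.succ) (Fin.succ_ne_zero l).symm
      intro r
      simp [N]
    rw [Matrix.det_succ_column_zero] at hN
    rw [← hN]
    symm
    apply Fintype.sum_of_injective (Fin.castLE hn) (Fin.castLE_injective hn)
    · intro i hi
      have : ¬ ((i : ℕ) < q + 1 + 1) := fun h1 => hi ⟨⟨i, h1⟩, rfl⟩
      simp only [β, dif_neg this, zero_mul]
    · intro j
      have hj : ((Fin.castLE hn j : Fin n) : ℕ) < q + 1 + 1 := j.2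
      simp only [β, dif_pos hj]
      rw [hw, topErase_emb]
      simp only [N, Fin.cons_zero, Fin.val_castLE]
      have : ∀ A B : Matrix (Fin (q+1)) (Fin (q+1)) ℝ, A = B → ∀ s t : ℝ,
        s * t * A.det = s * B.det * t := by rintro A B rfl s t; ring
      apply this
      ext r s
      rfl
  have r1 := key α hα
  have r2 := key β hβ
  rw [hβx a ha, hβx b hb] at r2
  have hDa : D a ≠ 0 := by
    have haI : a ∉ I := by simp [I]
    have hb' : (b : ℕ) < q + 1 + 1 := by omega
    have hins : (topErase n (q+1) hn ⟨b, hb'⟩).1 = insert a I := by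
      simp only [topErase, I]
      rw [Finset.erase_right_comm, Finset.insert_erase]
      · rfl
      · rw [Finset.mem_erase, mem_topIdx]; exact ⟨hab, by omega⟩
    have hwb : w (topErase n (q+1) hn ⟨b, hb'⟩) ≠ 0 := by
      rw [hsl _ (slice_subset_topErase n (q+1) k hn _ hb), modelPi_topErase]
      simp only [eps, Fin.val_castLE, if_pos hb, mul_one]
      exact mul_ne_zero (by positivity) hxb
    rcases hDw a haI _ hins with h2 | h2 <;> rw [h2]
    · exact hwb
    · exact neg_ne_zero.2 hwb
  apply mul_right_cancel₀ hDa
  linear_combination x b * r1 - α b * r2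



lemma ghat_eq_reindex (k m : ℕ) (g : Matrix (Fin k) (Fin k) ℝ) :
    ghat (k + m) k g = Matrix.reindex finSumFinEquiv finSumFinEquiv
      (Matrix.fromBlocks g 0 0 (1 : Matrix (Fin m) (Fin m) ℝ)) := by
  ext i j
  refine Fin.addCases (fun i => ?_) (fun i => ?_) i <;>
  refine Fin.addCases (fun j => ?_) (fun j => ?_) j
  · simp [ghat]
  · simp [ghat]
  · have : Fin.natAdd k i ≠ Fin.castAdd m j := by
      intro h; have := congrArg Fin.val h; simp at this; omega
    simp [ghat, this]
  · simp [ghat, Matrix.one_apply]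

lemma ghat_mul {n k : ℕ} (h : k ≤ n) (g g' : Matrix (Fin k) (Fin k) ℝ) :
    ghat n k (g * g') = ghat n k g * ghat n k g' := by
  obtain ⟨m, rfl⟩ := Nat.exists_eq_add_of_le h
  simp only [ghat_eq_reindex, Matrix.reindex_apply]
  rw [Matrix.submatrix_mul_equiv, Matrix.fromBlocks_multiply]
  simp

lemma ghat_one {n k : ℕ} (h : k ≤ n) : ghat n k 1 = 1 := by
  obtain ⟨m, rfl⟩ := Nat.exists_eq_add_of_le h
  simp only [ghat_eq_reindex, Matrix.reindex_apply]
  rw [Matrix.fromBlocks_one, Matrix.submatrix_one_equiv]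

lemma ghat_transpose {n k : ℕ} (h : k ≤ n) (g : Matrix (Fin k) (Fin k) ℝ) :
    (ghat n k g).transpose = ghat n k g.transpose := by
  obtain ⟨m, rfl⟩ := Nat.exists_eq_add_of_le h
  simp only [ghat_eq_reindex, Matrix.reindex_apply, Matrix.transpose_submatrix,
    Matrix.fromBlocks_transpose]
  simp

lemma ghat_det {n k : ℕ} (h : k ≤ n) (g : Matrix (Fin k) (Fin k) ℝ) :
    (ghat n k g).det = g.det := by
  obtain ⟨m, rfl⟩ := Nat.exists_eq_add_of_le h
  rw [ghat_eq_reindex, Matrix.det_reindex_self, Matrix.det_fromBlocks_zero₂₁]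
  simp

lemma ghat_inv {n k : ℕ} (h : k ≤ n) (g : Matrix (Fin k) (Fin k) ℝ) (hg : g.transpose * g = 1) :
    (ghat n k g)⁻¹ = ghat n k g.transpose := by
  apply Matrix.inv_eq_left_inv
  rw [← ghat_mul h, hg, ghat_one h]

lemma ghat_mulVec_ge {n k : ℕ} (g : Matrix (Fin k) (Fin k) ℝ) (x : Fin n → ℝ)
    (i : Fin n) (hi : k ≤ (i : ℕ)) : (ghat n k g).mulVec x i = x i := by
  have : ∀ j, ghat n k g i j = if i = j then 1 else 0 := by
    intro j
    simp [ghat, not_lt.2 hi]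
  simp [Matrix.mulVec, dotProduct, this]

lemma ghat_mulVec_lt {n k : ℕ} (h : k ≤ n) (g : Matrix (Fin k) (Fin k) ℝ) (x : Fin n → ℝ)
    (i : Fin k) : (ghat n k g).mulVec x (Fin.castLE h i) =
      g.mulVec (fun j => x (Fin.castLE h j)) i := by
  simp only [Matrix.mulVec, dotProduct]
  symm
  apply Fintype.sum_of_injective (Fin.castLE h) (Fin.castLE_injective h)
  · intro j hj
    have : ¬ (j : ℕ) < k := fun h1 => hj ⟨⟨j, h1⟩, rfl⟩
    simp [ghat, this]
  · intro j
    simp [ghat]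

/-- The squared norm of the first `k` coordinates. -/
def nsq {n k : ℕ} (h : k ≤ n) (x : Fin n → ℝ) : ℝ := ∑ i : Fin k, x (Fin.castLE h i) ^ 2

lemma nsq_ghat {n k : ℕ} (h : k ≤ n) (g : Matrix (Fin k) (Fin k) ℝ) (hg : g.transpose * g = 1)
    (x : Fin n → ℝ) : nsq h ((ghat n k g).mulVec x) = nsq h x := by
  simp only [nsq, ghat_mulVec_lt]
  have : ∀ v : Fin k → ℝ, ∑ i, (g.mulVec v i) ^ 2 = ∑ i, v i ^ 2 := by
    intro v
    have e : ∀ u : Fin k → ℝ, ∑ i, u i ^ 2 = u ⬝ᵥ u := by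
      intro u; simp [dotProduct, sq]
    rw [e, e, Matrix.dotProduct_mulVec, Matrix.vecMul_mulVec, ← Matrix.dotProduct_mulVec, hg,
      Matrix.one_mulVec]
  exact this _

/-- Householder reflections. -/
noncomputable def house {k : ℕ} (u : Fin k → ℝ) : Matrix (Fin k) (Fin k) ℝ :=
  1 - (2 / (u ⬝ᵥ u)) • Matrix.vecMulVec u u

lemma house_mulVec {k : ℕ} (u v : Fin k → ℝ) :
    (house u).mulVec v = v - (2 / (u ⬝ᵥ u) * (u ⬝ᵥ v)) • u := by
  rw [house, Matrix.sub_mulVec, Matrix.one_mulVec, Matrix.smul_mulVec, Matrix.vecMulVec_mulVec]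
  ext i
  simp [mul_assoc, mul_comm]

lemma house_orth {k : ℕ} (u : Fin k → ℝ) (hu : u ≠ 0) : (house u).transpose * house u = 1 := by
  have h0 : u ⬝ᵥ u ≠ 0 := fun h => hu (dotProduct_self_eq_zero.1 h)
  have ht : (house u).transpose = house u := by
    rw [house, Matrix.transpose_sub, Matrix.transpose_smul, Matrix.transpose_vecMulVec,
      Matrix.transpose_one]
  rw [ht]
  apply Matrix.ext_of_mulVec_single
  intro i
  rw [← Matrix.mulVec_mulVec, house_mulVec, house_mulVec, Matrix.one_mulVec]
  rw [dotProduct_sub, dotProduct_smul]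
  ext j
  simp only [Pi.sub_apply, Pi.smul_apply, smul_eq_mul]
  field_simp
  ring

lemma house_det {k : ℕ} (u : Fin k → ℝ) (hu : u ≠ 0) : (house u).det = -1 := by
  have h0 : u ⬝ᵥ u ≠ 0 := fun h => hu (dotProduct_self_eq_zero.1 h)
  have : house u = 1 + Matrix.replicateCol Unit (-(2 / (u ⬝ᵥ u)) • u) * Matrix.replicateRow Unit u := by
    ext i j
    simp [house, Matrix.vecMulVec, Matrix.mul_apply]
    ring
  rw [this, Matrix.det_one_add_replicateCol_mul_replicateRow, dotProduct_smul]
  simp only [smul_eq_mul]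
  field_simp
  ring

lemma so_transitive {k : ℕ} (hk : 2 ≤ k) (v w : Fin k → ℝ) (hvw : v ⬝ᵥ v = w ⬝ᵥ w) :
    ∃ g : Matrix (Fin k) (Fin k) ℝ, g.transpose * g = 1 ∧ g.det = 1 ∧ g.mulVec v = w := by
  by_cases h : v = w
  · exact ⟨1, by simp, by simp, by simp [h]⟩
  have hu : v - w ≠ 0 := sub_ne_zero.2 h
  obtain ⟨u, hu0, huw⟩ : ∃ u : Fin k → ℝ, u ≠ 0 ∧ u ⬝ᵥ w = 0 := by
    obtain ⟨k, rfl⟩ : ∃ k', k = k' + 2 := ⟨k - 2, by omega⟩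
    by_cases h0 : w 0 = 0
    · refine ⟨Pi.single 0 1, ?_, by simp [h0]⟩
      intro h; have := congrFun h 0; simp at this
    · refine ⟨Pi.single 0 (-(w 1)) + Pi.single 1 (w 0), ?_, ?_⟩
      · intro h; have := congrFun h 1; simp at this; exact h0 this
      · rw [add_dotProduct]; simp; ring
  refine ⟨house u * house (v - w), ?_, ?_, ?_⟩
  · rw [Matrix.transpose_mul, Matrix.mul_assoc, ← Matrix.mul_assoc _ (house u),
      house_orth u hu0, Matrix.one_mul, house_orth _ hu]
  · rw [Matrix.det_mul, house_det u hu0, house_det _ hu]; norm_num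
  · have h1 : (house (v - w)).mulVec v = w := by
      rw [house_mulVec]
      have h0 : (v - w) ⬝ᵥ (v - w) ≠ 0 := fun h => hu (dotProduct_self_eq_zero.1 h)
      have h2 : (v - w) ⬝ᵥ (v - w) = 2 * ((v - w) ⬝ᵥ v) := by
        simp only [sub_dotProduct, dotProduct_sub, dotProduct_comm w v]
        linarith
      have h3 : 2 / ((v - w) ⬝ᵥ (v - w)) * ((v - w) ⬝ᵥ v) = 1 := by
        rw [div_mul_eq_mul_div, ← h2, div_self h0]
      rw [h3]; simp
    rw [← Matrix.mulVec_mulVec, h1, house_mulVec, huw]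
    simp

/-- Invariance of the relevant coordinates of a sliced-model vector. -/
lemma slice_invariant {n q k : ℕ} (hn : q < n) (hk : 1 ≤ k) (hkq : k ≤ q) (w : MultiVec n q)
    (x : Fin n → ℝ)
    (h : contr n q (k - 1) (sliceIdx n q k) w =
      contr n q (k - 1) (sliceIdx n q k) (modelPi n q k x))
    (g : Matrix (Fin k) (Fin k) ℝ) (hg : g.transpose * g = 1) (hd : g.det = 1)
    (b : Fin (q + 1)) (hb : (b : ℕ) < k) :
    extPow n q (ghat n k g) w (topErase n q hn b) =
      (-1 : ℝ) ^ (b : ℕ) * (ghat n k g).mulVec x (Fin.castLE hn b) := by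
  have h1 : extPow n q (ghat n k g) w (topErase n q hn b) =
      extPow n q (ghat n k g) (modelPi n q k x) (topErase n q hn b) := by
    simp only [extPow]
    refine Finset.sum_congr rfl fun I _ => ?_
    by_cases hI : sliceIdx n q k ⊆ I.1
    · rw [slice_eq hn hk hkq w _ h I hI]
    · rw [Finset.not_subset] at hI
      obtain ⟨s, hs, hsI⟩ := hI
      rw [det_submatrix_row_zero _ _ I s (slice_subset_topErase n q k hn b hb hs)]
      · simp
      · intro j hj
        have hs' := (mem_sliceIdx s).1 hs
        have : s ≠ j := by rintro rfl; exact hsI hj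
        simp [ghat, not_lt.2 hs'.1, this]
  rw [h1, extPow_modelPi]
  have hG : (ghat n k g).submatrix (Fin.castLE hn) (Fin.castLE hn) = ghat (q+1) k g := by
    ext i j
    simp [ghat]
  rw [hG]
  have hk' : k ≤ q + 1 := by omega
  have hadj : (ghat (q+1) k g).adjugate = (ghat (q+1) k g).transpose := by
    have e1 : (ghat (q+1) k g).transpose * ghat (q+1) k g = 1 := by
      rw [ghat_transpose hk', ← ghat_mul hk', hg, ghat_one hk']
    have e2 := Matrix.mul_adjugate (ghat (q+1) k g)
    rw [ghat_det hk', hd, one_smul] at e2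
    calc (ghat (q+1) k g).adjugate
        = (ghat (q+1) k g).transpose * ghat (q+1) k g * (ghat (q+1) k g).adjugate := by
          rw [e1, Matrix.one_mul]
      _ = _ := by rw [Matrix.mul_assoc, e2, Matrix.mul_one]
  have hminor : ∀ j : Fin (q+1), ((ghat (q+1) k g).submatrix b.succAbove j.succAbove).det =
      (-1 : ℝ) ^ ((b : ℕ) + (j : ℕ)) * ghat (q+1) k g b j := by
    intro j
    have := Matrix.adjugate_fin_succ_eq_det_submatrix (ghat (q+1) k g) j b
    rw [hadj, Matrix.transpose_apply] at this
    rw [this, ← mul_assoc, ← mul_pow]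
    simp
  simp_rw [hminor]
  rw [Matrix.mulVec, dotProduct, Finset.mul_sum]
  apply Fintype.sum_of_injective (Fin.castLE hn) (Fin.castLE_injective hn)
  · intro j hj
    have h2 : ¬ (j : ℕ) < q + 1 := fun h1 => hj ⟨⟨j, h1⟩, rfl⟩
    have h3 : ¬ (j : ℕ) < k := by omega
    simp [ghat, h3, hb]
  · intro j
    by_cases hj : (j : ℕ) < k
    · have : (-1 : ℝ) ^ (j : ℕ) * (-1 : ℝ) ^ (j : ℕ) = 1 := by
        rw [← mul_pow]; simp
      simp only [eps, Fin.val_castLE, if_pos hj]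
      simp only [ghat, Matrix.of_apply, Fin.val_castLE, hj, hb, dif_pos]
      rw [pow_add]
      linear_combination ((-1 : ℝ) ^ (b : ℕ) * g ⟨b, hb⟩ ⟨j, hj⟩ * x (Fin.castLE hn j)) * this
    · simp [ghat, hj, hb]


open Topology Filter

lemma jac_eq {n : ℕ} (φ : (Fin n → ℝ) → (Fin n → ℝ)) (x : Fin n → ℝ) :
    jac φ x = LinearMap.toMatrix' (fderiv ℝ φ x : (Fin n → ℝ) →ₗ[ℝ] (Fin n → ℝ)) := by
  ext i j
  simp [jac, LinearMap.toMatrix'_apply]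

lemma jac_mulVec {n : ℕ} (φ : (Fin n → ℝ) → (Fin n → ℝ)) (x v : Fin n → ℝ) :
    (jac φ x).mulVec v = fderiv ℝ φ x v := by
  rw [jac_eq, LinearMap.toMatrix'_mulVec]
  rfl

lemma jac_left_inv {n : ℕ} {φ : (Fin n → ℝ) → (Fin n → ℝ)} {W : Set (Fin n → ℝ)}
    (h : IsSmoothDiffeoOn φ W) {z : Fin n → ℝ} (hz : z ∈ W) :
    DifferentiableAt ℝ φ z ∧ jac φ z * (jac φ z)⁻¹ = 1 ∧ (jac φ z)⁻¹ * jac φ z = 1 := by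
  obtain ⟨hW, hW', hφ, ψ, hψ, hl, hr⟩ := h
  have d1 : DifferentiableAt ℝ φ z :=
    (hφ.contDiffAt (hW.mem_nhds hz)).differentiableAt (by simp)
  have d2 : DifferentiableAt ℝ ψ (φ z) :=
    (hψ.contDiffAt (hW'.mem_nhds ⟨z, hz, rfl⟩)).differentiableAt (by simp)
  have h1 : (fun x => ψ (φ x)) =ᶠ[𝓝 z] fun x => x := by
    filter_upwards [hW.mem_nhds hz] with x hx using hl x hx
  have h2 : (fderiv ℝ ψ (φ z)).comp (fderiv ℝ φ z) = ContinuousLinearMap.id ℝ _ := by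
    have := (d2.hasFDerivAt.comp z d1.hasFDerivAt)
    exact (this.congr_of_eventuallyEq h1.symm).unique (hasFDerivAt_id z)
  have h3 : jac ψ (φ z) * jac φ z = 1 := by
    apply Matrix.ext_of_mulVec_single
    intro i
    rw [← Matrix.mulVec_mulVec, jac_mulVec, jac_mulVec, Matrix.one_mulVec]
    exact congrArg (fun L => L (Pi.single i 1)) h2
  have h4 : IsUnit (jac φ z).det := by
    have := congrArg Matrix.det h3
    rw [Matrix.det_mul, Matrix.det_one] at this
    exact IsUnit.of_mul_eq_one _ (by rw [mul_comm]; exact this)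
  exact ⟨d1, Matrix.mul_nonsing_inv _ h4, Matrix.nonsing_inv_mul _ h4⟩

lemma exists_ne_of_nsq {n k : ℕ} (h : k ≤ n) (x : Fin n → ℝ) (hx : nsq h x ≠ 0) :
    ∃ b : Fin n, (b : ℕ) < k ∧ x b ≠ 0 := by
  by_contra hcon
  push Not at hcon
  apply hx
  apply Finset.sum_eq_zero
  intro i _
  rw [hcon _ (by simp)]
  simp

lemma sum_castLE_eq {n k : ℕ} (h : k ≤ n) (f : Fin n → ℝ) (hf : ∀ i : Fin n, k ≤ (i : ℕ) → f i = 0) :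
    ∑ i, f i = ∑ i : Fin k, f (Fin.castLE h i) := by
  symm
  apply Fintype.sum_of_injective (Fin.castLE h) (Fin.castLE_injective h)
  · intro j hj
    exact hf j (not_lt.1 fun h1 => hj ⟨⟨j, h1⟩, rfl⟩)
  · intro j; rfl

/-- The first integrals `φ_j`, `j ≥ q`, have vanishing derivative along spheres. -/
lemma first_integral {n q k : ℕ} (hn : q < n) (hk : 1 ≤ k) (hkq : k ≤ q) (hkn : k ≤ n)
    {φ : (Fin n → ℝ) → (Fin n → ℝ)} {W : Set (Fin n → ℝ)}
    (hφ : IsSmoothDiffeoOn φ W) {z : Fin n → ℝ} (hz : z ∈ W) (w : MultiVec n q)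
    (hw : extPow n q (jac φ z) w = stdVec n q)
    (h : contr n q (k - 1) (sliceIdx n q k) w =
      contr n q (k - 1) (sliceIdx n q k) (modelPi n q k z))
    (hz0 : nsq hkn z ≠ 0) (j : Fin n) (hj : q ≤ (j : ℕ)) (u : Fin n → ℝ)
    (hu : ∀ i : Fin n, k ≤ (i : ℕ) → u i = 0)
    (huz : ∑ i : Fin k, z (Fin.castLE hkn i) * u (Fin.castLE hkn i) = 0) :
    fderiv ℝ φ z u j = 0 := by
  obtain ⟨-, hr, hl⟩ := jac_left_inv hφ hz
  have hw' : w = extPow n q (jac φ z)⁻¹ (stdVec n q) := by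
    rw [← hw, ← extPow_mul, hl, extPow_one]
  obtain ⟨b, hb, hzb⟩ := exists_ne_of_nsq hkn z hz0
  have hrel := fun a ha => annihilator_rel hn hk hkq
    ((jac φ z)⁻¹.submatrix id (Fin.castLE hn.le)) w
    (fun J => by rw [hw', extPow_std hn.le]; rfl) z h (fun i => jac φ z j i)
    (fun l => by
      have := congrFun (congrFun hr j) (Fin.castLE hn.le l)
      rw [Matrix.mul_apply, Matrix.one_apply_ne] at this
      · exact this
      · intro h
        have := congrArg Fin.val h
        simp at this
        omega) a b ha hb hzb
  rw [← jac_mulVec]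
  simp only [Matrix.mulVec, dotProduct]
  rw [sum_castLE_eq hkn _ (fun i hi => by rw [hu i hi, mul_zero])]
  have : ∀ i : Fin k, jac φ z j (Fin.castLE hkn i) = jac φ z j b / z b * z (Fin.castLE hkn i) := by
    intro i
    have := hrel (Fin.castLE hkn i) (by simp)
    field_simp
    linarith
  simp_rw [this, mul_assoc]
  rw [← Finset.mul_sum, huz, mul_zero]

/-- Replace the radius and tail of `v` by those of `z`. -/
noncomputable def Psi {n k : ℕ} (h : k ≤ n) (v z : Fin n → ℝ) : Fin n → ℝ :=
  fun i => if (i : ℕ) < k then (√(nsq h z) / √(nsq h v)) * v i else z i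

lemma nsq_nonneg {n k : ℕ} (h : k ≤ n) (v : Fin n → ℝ) : 0 ≤ nsq h v :=
  Finset.sum_nonneg fun _ _ => sq_nonneg _

lemma nsq_continuous {n k : ℕ} (h : k ≤ n) : Continuous (nsq h) := by
  unfold nsq
  fun_prop

lemma nsq_differentiable {n k : ℕ} (h : k ≤ n) : Differentiable ℝ (nsq h) := by
  unfold nsq
  fun_prop

lemma nsq_Psi {n k : ℕ} (h : k ≤ n) (v z : Fin n → ℝ) (hv : nsq h v ≠ 0) :
    nsq h (Psi h v z) = nsq h z := by
  have : nsq h (Psi h v z) = (√(nsq h z) / √(nsq h v)) ^ 2 * nsq h v := by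
    have e : ∀ c : ℝ, c * nsq h v = ∑ i : Fin k, c * v (Fin.castLE h i) ^ 2 := by
      intro c; rw [nsq, Finset.mul_sum]
    rw [e]
    change ∑ i : Fin k, Psi h v z (Fin.castLE h i) ^ 2 = _
    apply Finset.sum_congr rfl
    intro i _
    simp only [Psi, Fin.val_castLE, i.2, if_true]
    ring
  rw [this, div_pow, Real.sq_sqrt (nsq_nonneg _ _), Real.sq_sqrt (nsq_nonneg _ _)]
  field_simp

lemma Psi_eq {n k : ℕ} (h : k ≤ n) (v z : Fin n → ℝ) (hv : nsq h v ≠ 0)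
    (hvz : nsq h v = nsq h z) (ht : ∀ i : Fin n, k ≤ (i : ℕ) → v i = z i) : Psi h v z = v := by
  funext i
  simp only [Psi]
  split_ifs with hi
  · have : 0 < nsq h v := lt_of_le_of_ne (nsq_nonneg h v) hv.symm
    rw [← hvz, div_self (Real.sqrt_pos.2 this).ne', one_mul]
  · rw [ht i (not_lt.1 hi)]

lemma Psi_continuousAt {n k : ℕ} (h : k ≤ n) (p : Fin n → ℝ) (hp : nsq h p ≠ 0) :
    ContinuousAt (fun vz : (Fin n → ℝ) × (Fin n → ℝ) => Psi h vz.1 vz.2) (p, p) := by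
  have hp' : 0 < nsq h p := lt_of_le_of_ne (nsq_nonneg h p) hp.symm
  rw [continuousAt_pi]
  intro i
  simp only [Psi]
  have hc := nsq_continuous h
  split_ifs with hi
  · apply ContinuousAt.mul
    · apply ContinuousAt.div
      · exact (Real.continuous_sqrt.comp (hc.comp continuous_snd)).continuousAt
      · exact (Real.continuous_sqrt.comp (hc.comp continuous_fst)).continuousAt
      · exact (Real.sqrt_pos.2 hp').ne'
    · fun_prop
  · fun_prop

lemma Psi_differentiableAt {n k : ℕ} (h : k ≤ n) (v z : Fin n → ℝ) (hv : nsq h v ≠ 0) :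
    DifferentiableAt ℝ (fun v => Psi h v z) v := by
  have hp' : 0 < nsq h v := lt_of_le_of_ne (nsq_nonneg h v) hv.symm
  rw [differentiableAt_pi]
  intro i
  simp only [Psi]
  have hc := (nsq_differentiable h) v
  split_ifs with hi
  · apply DifferentiableAt.mul
    · simp only [div_eq_mul_inv]
      apply DifferentiableAt.mul
      · fun_prop
      · exact (hc.sqrt hv).fun_inv (Real.sqrt_pos.2 hp').ne'
    · fun_prop
  · fun_prop

lemma Psi_deriv {n k : ℕ} (h : k ≤ n) (v z u : Fin n → ℝ) (hv : nsq h v ≠ 0) :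
    (∀ i : Fin n, k ≤ (i : ℕ) → fderiv ℝ (fun v => Psi h v z) v u i = 0) ∧
    ∑ i : Fin k, Psi h v z (Fin.castLE h i) *
      fderiv ℝ (fun v => Psi h v z) v u (Fin.castLE h i) = 0 := by
  have hd := (Psi_differentiableAt h v z hv).hasFDerivAt
  have hdi := fun i => (hasFDerivAt_pi'.1 hd) i
  constructor
  · intro i hi
    have h1 : HasFDerivAt (fun v => Psi h v z i) (0 : (Fin n → ℝ) →L[ℝ] ℝ) v := by
      have : (fun v => Psi h v z i) = fun _ => z i := by
        funext v; simp [Psi, not_lt.2 hi]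
      rw [this]
      exact hasFDerivAt_const _ _
    have := (hdi i).unique h1
    exact congrArg (fun L => L u) this
  · have h1 := HasFDerivAt.fun_sum (u := Finset.univ)
      (fun (i : Fin k) _ => (hdi (Fin.castLE h i)).pow 2)
    have h2 : (fun v' => ∑ i : Fin k, Psi h v' z (Fin.castLE h i) ^ 2) =ᶠ[𝓝 v]
        fun _ => nsq h z := by
      have : ∀ᶠ v' in 𝓝 v, nsq h v' ≠ 0 := (nsq_continuous h).continuousAt.eventually_ne hv
      filter_upwards [this] with v' hv'
      exact nsq_Psi h v' z hv'
    have h3 := (h1.congr_of_eventuallyEq h2.symm).unique (hasFDerivAt_const _ _)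
    have h4 := congrArg (fun L => L u) h3
    simp only [_root_.sum_apply, _root_.smul_apply,
      ContinuousLinearMap.comp_apply, ContinuousLinearMap.proj_apply,
      _root_.zero_apply, smul_eq_mul] at h4
    have h5 : (2 : ℝ) * ∑ i : Fin k, Psi h v z (Fin.castLE h i) *
      fderiv ℝ (fun v => Psi h v z) v u (Fin.castLE h i) = 0 := by
      rw [← h4, Finset.mul_sum]
      apply Finset.sum_congr rfl
      intro i _
      simp
      ring
    linarith



lemma local_const {n q k : ℕ} (hn : q < n) (hk : 1 ≤ k) (hkq : k ≤ q) (hkn : k ≤ n)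
    (P : (Fin n → ℝ) → MultiVec n q)
    {φ : (Fin n → ℝ) → (Fin n → ℝ)} {W : Set (Fin n → ℝ)}
    (hφ : IsSmoothDiffeoOn φ W)
    (hw : ∀ x ∈ W, extPow n q (jac φ x) (P x) = stdVec n q)
    (h : ∀ x ∈ W, contr n q (k - 1) (sliceIdx n q k) (P x) =
      contr n q (k - 1) (sliceIdx n q k) (modelPi n q k x))
    (p : Fin n → ℝ) (hp : p ∈ W) (hp0 : nsq hkn p ≠ 0) :
    ∃ ε > 0, Metric.ball p ε ⊆ W ∧ ∀ z ∈ Metric.ball p ε, ∀ v ∈ Metric.ball p ε,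
      nsq hkn v = nsq hkn z → (∀ i : Fin n, k ≤ (i : ℕ) → v i = z i) →
      ∀ j : Fin n, q ≤ (j : ℕ) → φ v j = φ z j := by
  have hW : IsOpen W := hφ.1
  have hPp : Psi hkn p p = p := Psi_eq hkn p p hp0 rfl (fun _ _ => rfl)
  have e1 : ∀ᶠ vz : (Fin n → ℝ) × (Fin n → ℝ) in 𝓝 (p, p), Psi hkn vz.1 vz.2 ∈ W := by
    apply (Psi_continuousAt hkn p hp0).eventually_mem
    apply hW.mem_nhds
    simpa only [hPp] using hp
  have e2 : ∀ᶠ vz : (Fin n → ℝ) × (Fin n → ℝ) in 𝓝 (p, p), nsq hkn vz.1 ≠ 0 := by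
    have : ContinuousAt (fun vz : (Fin n → ℝ) × (Fin n → ℝ) => nsq hkn vz.1) (p, p) :=
      ((nsq_continuous hkn).comp continuous_fst).continuousAt
    exact this.eventually_ne hp0
  have e3 : ∀ᶠ vz : (Fin n → ℝ) × (Fin n → ℝ) in 𝓝 (p, p), vz.1 ∈ W :=
    continuous_fst.continuousAt.eventually_mem (hW.mem_nhds hp)
  obtain ⟨ε, hε, hb⟩ := Metric.eventually_nhds_iff_ball.1 (e1.and (e2.and e3))
  have hb' : ∀ v ∈ Metric.ball p ε, ∀ z ∈ Metric.ball p ε,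
      Psi hkn v z ∈ W ∧ nsq hkn v ≠ 0 ∧ v ∈ W := by
    intro v hv z hz
    apply hb (v, z)
    rw [← ball_prod_same]
    exact ⟨hv, hz⟩
  refine ⟨ε, hε, fun v hv => (hb' v hv v hv).2.2, ?_⟩
  intro z hz v hv hvz ht j hj
  have hz0 := (hb' z hz z hz).2.1
  have hv0 := (hb' v hv v hv).2.1
  have hder : ∀ v ∈ Metric.ball p ε,
      HasFDerivAt (fun v => φ (Psi hkn v z) j) (0 : (Fin n → ℝ) →L[ℝ] ℝ) v := by
    intro v hv
    obtain ⟨hW1, hv0, -⟩ := hb' v hv z hz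
    have d1 := (jac_left_inv hφ hW1).1.hasFDerivAt
    have d2 := (Psi_differentiableAt hkn v z hv0).hasFDerivAt
    have d3 := (hasFDerivAt_pi'.1 (d1.comp v d2)) j
    have hL : (ContinuousLinearMap.proj (R := ℝ) (φ := fun _ : Fin n => ℝ) j ∘SL
        (fderiv ℝ φ (Psi hkn v z) ∘SL fderiv ℝ (fun v => Psi hkn v z) v)) = 0 := by
      refine ContinuousLinearMap.ext fun u => ?_
      obtain ⟨q1, q2⟩ := Psi_deriv hkn v z u hv0
      exact first_integral hn hk hkq hkn hφ hW1 (P _) (hw _ hW1) (h _ hW1)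
        (by rw [nsq_Psi hkn v z hv0]; exact hz0) j hj _ q1 q2
    exact hL ▸ d3
  have hconst := Metric.isOpen_ball.is_const_of_fderiv_eq_zero (𝕜 := ℝ)
    (convex_ball p ε).isPreconnected
    (fun v hv => (hder v hv).differentiableAt.differentiableWithinAt)
    (fun v hv => (hder v hv).fderiv) hv hz
  rwa [Psi_eq hkn v z hv0 hvz ht, Psi_eq hkn z z hz0 rfl (fun _ _ => rfl)] at hconst

lemma local_inv {n q k : ℕ} (hn : q < n) (hk : 1 ≤ k) (hkq : k ≤ q) (hkn : k ≤ n)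
    (U : Set (Fin n → ℝ))
    (P : (Fin n → ℝ) → MultiVec n q) (hN : IsNambu n q P U)
    (h : ∀ x ∈ U, contr n q (k - 1) (sliceIdx n q k) (P x) =
      contr n q (k - 1) (sliceIdx n q k) (modelPi n q k x))
    (p : Fin n → ℝ) (hp : p ∈ U) (hp0 : nsq hkn p ≠ 0) :
    ∃ V ∈ 𝓝 p, ∀ x ∈ V, ∀ y ∈ V, ∀ g : Matrix (Fin k) (Fin k) ℝ, g.transpose * g = 1 →
      (ghat n k g).mulVec x = y → ∃ c : ℝ, P y = c • extPow n q (ghat n k g) (P x) := by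
  have hPp : P p ≠ 0 := by
    obtain ⟨b, hb, hpb⟩ := exists_ne_of_nsq hkn p hp0
    intro h0
    have hb' : (b : ℕ) < q + 1 := by omega
    have h1 := slice_eq hn hk hkq _ _ (h p hp) (topErase n q hn ⟨b, hb'⟩)
      (slice_subset_topErase n q k hn _ hb)
    rw [modelPi_topErase, h0] at h1
    simp only [eps, Fin.val_castLE, if_pos hb, mul_one] at h1
    have : (-1 : ℝ) ^ (b : ℕ) * p b ≠ 0 := mul_ne_zero (by positivity) hpb
    exact this h1.symm
  obtain ⟨W, hpW, hWU, φ, hφ, hw⟩ := hN.2 p hp hPp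
  obtain ⟨ε, hε, hball, hconst⟩ := local_const hn hk hkq hkn P hφ hw
    (fun x hx => h x (hWU hx)) p hpW hp0
  refine ⟨Metric.ball p ε, Metric.ball_mem_nhds p hε, ?_⟩
  intro x hx y hy g hg hxy
  let G : (Fin n → ℝ) →L[ℝ] (Fin n → ℝ) := LinearMap.toContinuousLinearMap (Matrix.toLin' (ghat n k g))
  have hG : ∀ v, G v = (ghat n k g).mulVec v := fun v => rfl
  obtain ⟨dx, hxr, hxl⟩ := jac_left_inv hφ (hball hx)
  obtain ⟨dy, hyr, hyl⟩ := jac_left_inv hφ (hball hy)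
  have hGx : G x = y := hxy
  have hrow : ∀ j : Fin n, q ≤ (j : ℕ) → ∀ u, fderiv ℝ φ y (G u) j = fderiv ℝ φ x u j := by
    intro j hj u
    have dyx : HasFDerivAt φ (fderiv ℝ φ y) (G x) := by rw [hGx]; exact dy.hasFDerivAt
    have d1 := (hasFDerivAt_pi'.1 (dyx.comp x G.hasFDerivAt)) j
    have d2 := (hasFDerivAt_pi'.1 dx.hasFDerivAt) j
    have ev : (fun z => φ z j) =ᶠ[𝓝 x] fun z => (φ ∘ G) z j := by
      have m1 : ∀ᶠ z in 𝓝 x, z ∈ Metric.ball p ε := Metric.isOpen_ball.mem_nhds hx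
      have m2 : ∀ᶠ z in 𝓝 x, G z ∈ Metric.ball p ε := by
        apply G.continuous.continuousAt.eventually_mem
        rw [hGx]
        exact Metric.isOpen_ball.mem_nhds hy
      filter_upwards [m1, m2] with z hz1 hz2
      refine (hconst z hz1 (G z) hz2 ?_ ?_ j hj).symm
      · rw [hG, nsq_ghat hkn g hg]
      · intro i hi
        rw [hG, ghat_mulVec_ge g z i hi]
    have := (d1.congr_of_eventuallyEq ev).unique d2
    exact congrArg (fun L => L u) this
  have hrow' : ∀ j : Fin n, q ≤ (j : ℕ) → ∀ i, (jac φ y * ghat n k g) j i = jac φ x j i := by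
    intro j hj i
    have h1 := hrow j hj (Pi.single i 1)
    rw [hG, ← jac_mulVec, Matrix.mulVec_mulVec, ← jac_mulVec] at h1
    simpa using h1
  obtain ⟨c, hc⟩ := extPow_std_of_block hn.le (jac φ y * ghat n k g * (jac φ x)⁻¹) (by
    intro i j hi hj
    have : (jac φ y * ghat n k g * (jac φ x)⁻¹) i j = (jac φ x * (jac φ x)⁻¹) i j := by
      rw [Matrix.mul_apply, Matrix.mul_apply]
      exact Finset.sum_congr rfl fun l _ => by rw [hrow' i hi l]
    rw [this, hxr, Matrix.one_apply_ne]
    rintro rfl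
    omega)
  -- `⋀ĝ P x = c • P y`
  have hPx : P x = extPow n q (jac φ x)⁻¹ (stdVec n q) := by
    rw [← hw x (hball hx), ← extPow_mul, hxl, extPow_one]
  have hPy : P y = extPow n q (jac φ y)⁻¹ (stdVec n q) := by
    rw [← hw y (hball hy), ← extPow_mul, hyl, extPow_one]
  have hmain : extPow n q (ghat n k g) (P x) = c • P y := by
    rw [hPx, hPy, ← extPow_smul, ← hc, ← extPow_mul, ← extPow_mul, Matrix.mul_assoc (jac φ y),
      ← Matrix.mul_assoc (jac φ y)⁻¹, hyl, Matrix.one_mul]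
  have hcne : c ≠ 0 := by
    rintro rfl
    rw [zero_smul] at hmain
    have h2 : extPow n q (ghat n k g.transpose) (extPow n q (ghat n k g) (P x)) = P x := by
      rw [← extPow_mul, ← ghat_mul hkn, hg, ghat_one hkn, extPow_one]
    rw [hmain] at h2
    have h3 : P x = 0 := by
      rw [← h2]; funext J; simp [extPow]
    have h4 := hw x (hball hx)
    rw [h3] at h4
    have h5 := congrFun h4 (stdIdx n q hn.le)
    simp [extPow, stdVec, stdIdx] at h5
  refine ⟨c⁻¹, ?_⟩
  rw [hmain, smul_smul, inv_mul_cancel₀ hcne, one_smul]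

/-- The `SO(k)`-orbit. -/
def orbit {n k : ℕ} (h : k ≤ n) (x : Fin n → ℝ) : Set (Fin n → ℝ) :=
  {z | nsq h z = nsq h x ∧ ∀ i : Fin n, k ≤ (i : ℕ) → z i = x i}

lemma orbit_preconnected {n k : ℕ} (h : k ≤ n) (hk : 2 ≤ k) (x : Fin n → ℝ) :
    IsPreconnected (orbit h x) := by
  have hr : 1 < Module.rank ℝ (EuclideanSpace ℝ (Fin k)) := by
    rw [← Module.finrank_eq_rank, finrank_euclideanSpace_fin]
    exact_mod_cast hk
  have h1 := isPreconnected_sphere hr 0 (√(nsq h x))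
  let F : EuclideanSpace ℝ (Fin k) → (Fin n → ℝ) := fun v i =>
    if hi : (i : ℕ) < k then v ⟨i, hi⟩ else x i
  have hF : Continuous F := by
    apply continuous_pi
    intro i
    simp only [F]
    split_ifs with hi
    · fun_prop
    · fun_prop
  have h2 : orbit h x = F '' Metric.sphere 0 (√(nsq h x)) := by
    ext z
    constructor
    · rintro ⟨hz1, hz2⟩
      refine ⟨WithLp.toLp 2 (fun i : Fin k => z (Fin.castLE h i)), ?_, ?_⟩
      · rw [mem_sphere_zero_iff_norm, EuclideanSpace.norm_eq, ← hz1]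
        simp [nsq]
      · funext i
        simp only [F]
        split_ifs with hi
        · rfl
        · rw [hz2 i (not_lt.1 hi)]
    · rintro ⟨v, hv, rfl⟩
      rw [mem_sphere_zero_iff_norm, EuclideanSpace.norm_eq] at hv
      have h3 : nsq h (F v) = ∑ i, ‖v i‖ ^ 2 := by
        simp [nsq, F]
      refine ⟨?_, ?_⟩
      · rw [← h3] at hv
        exact (Real.sqrt_inj (nsq_nonneg _ _) (nsq_nonneg _ _)).1 hv
      · intro i hi
        simp [F, not_lt.2 hi]
  rw [h2]
  exact h1.image F hF.continuousOn

lemma orbit_transitive {n k : ℕ} (h : k ≤ n) (hk : 2 ≤ k) (x y z : Fin n → ℝ)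
    (hy : y ∈ orbit h x) (hz : z ∈ orbit h x) :
    ∃ g : Matrix (Fin k) (Fin k) ℝ, g.transpose * g = 1 ∧ g.det = 1 ∧
      (ghat n k g).mulVec y = z := by
  obtain ⟨g, h1, h2, h3⟩ := so_transitive hk (fun i => y (Fin.castLE h i))
    (fun i => z (Fin.castLE h i)) (by
      have := hy.1.trans hz.1.symm
      simpa [nsq, dotProduct, sq] using this)
  refine ⟨g, h1, h2, ?_⟩
  funext i
  by_cases hi : (i : ℕ) < k
  · have := ghat_mulVec_lt h g y ⟨i, hi⟩
    rw [h3] at this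
    exact this
  · rw [ghat_mulVec_ge g y i (not_lt.1 hi), hy.2 i (not_lt.1 hi), hz.2 i (not_lt.1 hi)]

lemma orth_mul {k : ℕ} {g h : Matrix (Fin k) (Fin k) ℝ} (hg : g.transpose * g = 1)
    (hh : h.transpose * h = 1) : (g * h).transpose * (g * h) = 1 := by
  rw [Matrix.transpose_mul, Matrix.mul_assoc, ← Matrix.mul_assoc _ g, hg, Matrix.one_mul, hh]

lemma orth_transpose {k : ℕ} {g : Matrix (Fin k) (Fin k) ℝ} (hg : g.transpose * g = 1) :
    g.transpose.transpose * g.transpose = 1 := by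
  rw [Matrix.transpose_transpose]
  exact mul_eq_one_comm.1 hg

theorem so_invariance (n q k : ℕ) (hq : 3 ≤ q) (hn : q < n) (hk3 : 3 ≤ k) (hkq : k ≤ q)
    (U : Set (Fin n → ℝ)) (hU : IsOpen U) (h0U : (0 : Fin n → ℝ) ∈ U)
    (hUinv : ∀ g : Matrix (Fin k) (Fin k) ℝ, g.transpose * g = 1 → g.det = 1 →
      (fun x => (ghat n k g).mulVec x) '' U = U)
    (P : (Fin n → ℝ) → MultiVec n q) (hN : IsNambu n q P U)
    (hflat : ∀ x ∈ U, (∀ j : Fin n, (j : ℕ) < q + 1 → x j = 0) →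
      ∀ l : ℕ, iteratedFDerivWithin ℝ l (fun z => P z - modelPi n q k z) U x = 0)
    (hslice : ∀ x ∈ U, contr n q (k - 1) (sliceIdx n q k) (P x) =
      contr n q (k - 1) (sliceIdx n q k) (modelPi n q k x)) :
    ∀ g : Matrix (Fin k) (Fin k) ℝ, g.transpose * g = 1 → g.det = 1 →
      ∀ x ∈ U, extPow n q (ghat n k g) (P ((ghat n k g)⁻¹.mulVec x)) = P x := by
  have hkn : k ≤ n := by omega
  have hk1 : 1 ≤ k := by omega
  have hmemU : ∀ g : Matrix (Fin k) (Fin k) ℝ, g.transpose * g = 1 → g.det = 1 → ∀ x ∈ U,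
      (ghat n k g).mulVec x ∈ U := by
    intro g hg hd x hx
    rw [← hUinv g hg hd]
    exact ⟨x, hx, rfl⟩
  have main : ∀ g : Matrix (Fin k) (Fin k) ℝ, g.transpose * g = 1 → g.det = 1 → ∀ x ∈ U,
      nsq hkn x ≠ 0 → P ((ghat n k g).mulVec x) = extPow n q (ghat n k g) (P x) := by
    intro g hg hd x hx hx0
    have hself : x ∈ orbit hkn x := ⟨rfl, fun _ _ => rfl⟩
    have hsub : orbit hkn x ⊆ U := by
      intro z hz
      obtain ⟨g', h1, h2, h3⟩ := orbit_transitive hkn (by omega) x x z hself hz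
      rw [← h3]
      exact hmemU g' h1 h2 x hx
    have hy : (ghat n k g).mulVec x ∈ orbit hkn x :=
      ⟨nsq_ghat hkn g hg x, fun i hi => ghat_mulVec_ge g x i hi⟩
    have hrel := (orbit_preconnected hkn (by omega) x).induction₂'
      (fun y z => ∀ g : Matrix (Fin k) (Fin k) ℝ, g.transpose * g = 1 →
        (ghat n k g).mulVec y = z → ∃ c : ℝ, P z = c • extPow n q (ghat n k g) (P y))
      (by
        intro y hy
        obtain ⟨V, hV, hV'⟩ := local_inv hn hk1 hkq hkn U P hN hslice y (hsub hy)
          (by rw [hy.1]; exact hx0)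
        have : ∀ᶠ z in 𝓝[orbit hkn x] y, z ∈ V := mem_nhdsWithin_of_mem_nhds hV
        filter_upwards [this] with z hz
        exact ⟨hV' y (mem_of_mem_nhds hV) z hz, hV' z hz y (mem_of_mem_nhds hV)⟩)
      (by
        intro y z w hy hz hw hyz hzw g hg hgy
        obtain ⟨g1, h1, h2, h3⟩ := orbit_transitive hkn (by omega) x y z hy hz
        have hgg : g * g1.transpose * g1 = g := by rw [Matrix.mul_assoc, h1, Matrix.mul_one]
        have ho : (g * g1.transpose).transpose * (g * g1.transpose) = 1 :=
          orth_mul hg (orth_transpose h1)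
        obtain ⟨c1, hc1⟩ := hyz g1 h1 h3
        obtain ⟨c2, hc2⟩ := hzw (g * g1.transpose) ho (by
          rw [← h3, Matrix.mulVec_mulVec, ← ghat_mul hkn, hgg, hgy])
        refine ⟨c2 * c1, ?_⟩
        rw [hc2, hc1, extPow_smul, ← extPow_mul, ← ghat_mul hkn, hgg, smul_smul])
      hself hy
    obtain ⟨c, hc⟩ := hrel g hg rfl
    have hy0 : nsq hkn ((ghat n k g).mulVec x) ≠ 0 := by rw [hy.1]; exact hx0
    obtain ⟨b, hb, hyb⟩ := exists_ne_of_nsq hkn _ hy0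
    have hb' : (b : ℕ) < q + 1 := by omega
    have e1 := congrFun hc (topErase n q hn ⟨b, hb'⟩)
    rw [Pi.smul_apply, slice_invariant hn hk1 hkq (P x) x (hslice x hx) g hg hd ⟨b, hb'⟩ hb,
      slice_eq hn hk1 hkq _ _ (hslice _ (hsub hy)) (topErase n q hn ⟨b, hb'⟩)
      (slice_subset_topErase n q k hn _ hb), modelPi_topErase] at e1
    simp only [eps, Fin.val_castLE, if_pos hb, mul_one, smul_eq_mul] at e1
    have hne : (-1 : ℝ) ^ (b : ℕ) * (ghat n k g).mulVec x b ≠ 0 :=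
      mul_ne_zero (by positivity) hyb
    have hc1 : c = 1 := by
      apply mul_right_cancel₀ hne
      rw [one_mul]
      exact e1.symm
    rw [hc, hc1, one_smul]
  have hcont : ContinuousOn P U := hN.1.continuousOn
  have main2 : ∀ g : Matrix (Fin k) (Fin k) ℝ, g.transpose * g = 1 → g.det = 1 → ∀ x ∈ U,
      P ((ghat n k g).mulVec x) = extPow n q (ghat n k g) (P x) := by
    intro g hg hd x hx
    by_cases hx0 : nsq hkn x = 0
    swap
    · exact main g hg hd x hx hx0
    let γ : ℝ → (Fin n → ℝ) := fun t => x + t • Pi.single (⟨0, by omega⟩ : Fin n) (1 : ℝ)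
    have hγ : Continuous γ := by fun_prop
    have hγ0 : γ 0 = x := by simp [γ]
    have c1 : ContinuousAt P (γ 0) := by
      rw [hγ0]; exact hcont.continuousAt (hU.mem_nhds hx)
    have hG : Continuous fun v => (ghat n k g).mulVec v := by fun_prop
    have c2 : ContinuousAt P ((ghat n k g).mulVec (γ 0)) := by
      rw [hγ0]; exact hcont.continuousAt (hU.mem_nhds (hmemU g hg hd x hx))
    have t1 : Tendsto (fun t => P ((ghat n k g).mulVec (γ t))) (𝓝[≠] 0)
        (𝓝 (P ((ghat n k g).mulVec (γ 0)))) := by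
      have : ContinuousAt (fun t => (ghat n k g).mulVec (γ t)) 0 := (hG.comp hγ).continuousAt
      exact (c2.tendsto.comp this.tendsto).mono_left nhdsWithin_le_nhds
    have t2 : Tendsto (fun t => extPow n q (ghat n k g) (P (γ t))) (𝓝[≠] 0)
        (𝓝 (extPow n q (ghat n k g) (P (γ 0)))) := by
      exact (((extPow_continuous (ghat n k g)).tendsto _).comp
        (c1.tendsto.comp hγ.continuousAt.tendsto)).mono_left nhdsWithin_le_nhds
    have ev : (fun t => P ((ghat n k g).mulVec (γ t))) =ᶠ[𝓝[≠] 0]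
        fun t => extPow n q (ghat n k g) (P (γ t)) := by
      have m1 : ∀ᶠ t in 𝓝[≠] (0 : ℝ), γ t ∈ U := by
        apply mem_nhdsWithin_of_mem_nhds
        apply hγ.continuousAt.eventually_mem
        rw [hγ0]; exact hU.mem_nhds hx
      filter_upwards [m1, self_mem_nhdsWithin] with t ht ht0
      apply main g hg hd _ ht
      have hxi : ∀ i : Fin k, x (Fin.castLE hkn i) = 0 := by
        intro i
        have := (Finset.sum_eq_zero_iff_of_nonneg (fun i _ => sq_nonneg _)).1 hx0 i
          (Finset.mem_univ _)
        exact pow_eq_zero_iff (two_ne_zero) |>.1 this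
      intro hcon
      have h1 := (Finset.sum_eq_zero_iff_of_nonneg (fun i _ => sq_nonneg _)).1 hcon
        (⟨0, by omega⟩ : Fin k) (Finset.mem_univ _)
      have h2 := pow_eq_zero_iff (two_ne_zero) |>.1 h1
      simp only [γ, Pi.add_apply, hxi, zero_add, Pi.smul_apply] at h2
      simp at h2
      exact ht0 h2
    have := tendsto_nhds_unique (t1.congr' ev) t2
    rwa [hγ0] at this
  intro g hg hd x hx
  rw [ghat_inv hkn g hg]
  have ho := orth_transpose hg
  have hdt : g.transpose.det = 1 := by rw [Matrix.det_transpose, hd]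
  rw [← main2 g hg hd _ (hmemU _ ho hdt x hx), Matrix.mulVec_mulVec, ← ghat_mul hkn,
    mul_eq_one_comm.1 hg, ghat_one hkn, Matrix.one_mulVec]



end NambuLin
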